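/- arXiv:2506.16397 — 2 statements merged into one kernel-verified Lean document; each statement's English description precedes it below -/
import Mathlib

section
/- Let F′ be a field and F a strict subfield of F′, let n ∈ ℕ, fix β ∈ F′ \ F, and let S ⊆ F be a finite nonempty subset. For α ∈ F^n let f_α ∈ F′[x_1,…,x_n,y_1,…,y_n] be the unique multilinear polynomial that agrees with 1/(Σ_{i=1}^n α_i x_i y_i − β) on the Boolean cube {0,1}^{2n}. For b ∈ {0,1}^n let f_α(x,b) ∈ F′[x_1,…,x_n] denote the polynomial obtained from f_α by substituting y_i := b_i for all i. Then the number of α ∈ S^n for which the F′-linear span of { f_α(x,b) : b ∈ {0,1}^n } has dimension strictly less than 2^n is at most 2^{2n}·|S|^{n−1}. -/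
/-!
Index rows and columns by subsets of `Fin n`. If the matrix `(1 / (∑ i ∈ A ∩ B, α i - β))` is
nonsingular, then the `2 ^ n` polynomials `f_α(x, b)` are linearly independent, since its columns
are their values on the Boolean cube. Multiplying row `A` by the product of `∑ i ∈ T, α i - β` over
all `T ⊆ A` leaves entries of degree `2 ^ |A| - 1` in `α`, so the determinant of the cleared matrix
is a polynomial in `α` of degree at most `∑ A, (2 ^ |A| - 1) = 3 ^ n - 2 ^ n`, and Schwartz–Zippel
bounds the number of its zeros in `S ^ n`.

This polynomial is nonzero because it is homogeneous in `α` and `β` jointly, so it suffices to look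
at `β = 0`. There the factor belonging to `T = ∅` kills all entries except those with `A ∩ B = ∅`,
and what remains is, up to nonzero row factors, the disjointness matrix, which is nonsingular.
-/

open Finset

section ClearedMatrix

variable {ι R R' : Type*} [DecidableEq ι] [CommRing R] [CommRing R']

/-- The matrix with entries `1 / (∑ i ∈ A ∩ B, α i - β)`, where row `A` has been multiplied by the
product of `∑ i ∈ T, α i - β` over all `T ⊆ A`. The factor `T = A ∩ B` is cancelled by omitting it,
so that the matrix makes sense over any commutative ring. -/
def clearedMatrix (α : ι → R) (β : R) : Matrix (Finset ι) (Finset ι) R :=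
  Matrix.of fun A B => ∏ T ∈ A.powerset.erase (A ∩ B), (∑ i ∈ T, α i - β)

theorem clearedMatrix_apply (α : ι → R) (β : R) (A B : Finset ι) :
    clearedMatrix α β A B = ∏ T ∈ A.powerset.erase (A ∩ B), (∑ i ∈ T, α i - β) :=
  rfl

theorem card_powerset_erase_inter (A B : Finset ι) :
    #(A.powerset.erase (A ∩ B)) = 2 ^ #A - 1 := by
  rw [card_erase_of_mem (mem_powerset.mpr inter_subset_left), card_powerset]

theorem clearedMatrix_mul_left_apply (c : R) (α : ι → R) (β : R) (A B : Finset ι) :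
    clearedMatrix (fun i => c * α i) (c * β) A B = c ^ (2 ^ #A - 1) * clearedMatrix α β A B := by
  simp only [clearedMatrix_apply, ← mul_sum, ← mul_sub, prod_mul_distrib, prod_const,
    card_powerset_erase_inter]

theorem clearedMatrix_zero_apply (α : ι → R) (A B : Finset ι) :
    clearedMatrix α 0 A B =
      if Disjoint A B then ∏ T ∈ A.powerset.erase ∅, ∑ i ∈ T, α i else 0 := by
  simp only [clearedMatrix_apply, sub_zero]
  split_ifs with hAB
  · rw [disjoint_iff_inter_eq_empty.mp hAB]
  · refine prod_eq_zero (mem_erase.mpr ⟨?_, empty_mem_powerset A⟩) sum_empty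
    exact fun h => hAB (disjoint_iff_inter_eq_empty.mpr h.symm)

variable [Fintype ι]

theorem map_det_clearedMatrix (φ : R →+* R') (α : ι → R) (β : R) :
    φ (clearedMatrix α β).det = (clearedMatrix (fun i => φ (α i)) (φ β)).det := by
  rw [RingHom.map_det]
  congr 1
  ext A B
  simp only [RingHom.mapMatrix_apply, Matrix.map_apply, clearedMatrix_apply, map_prod, map_sub,
    map_sum]

theorem det_clearedMatrix_mul_left (c : R) (α : ι → R) (β : R) :
    (clearedMatrix (fun i => c * α i) (c * β)).det =
      c ^ (∑ A : Finset ι, (2 ^ #A - 1)) * (clearedMatrix α β).det := by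
  rw [← prod_pow_eq_pow_sum, ← Matrix.det_mul_column]
  congr 1
  ext A B
  exact clearedMatrix_mul_left_apply c α β A B

theorem det_clearedMatrix_eq_prod_mul_det {α : ι → R} {β : R} {M : Matrix (Finset ι) (Finset ι) R}
    (hM : ∀ A B, M A B * (∑ i ∈ A ∩ B, α i - β) = 1) :
    (clearedMatrix α β).det =
      (∏ A : Finset ι, ∏ T ∈ A.powerset, (∑ i ∈ T, α i - β)) * M.det := by
  rw [← Matrix.det_mul_column]
  congr 1
  ext A B
  rw [Matrix.of_apply, clearedMatrix_apply,
    ← mul_prod_erase _ _ (mem_powerset.mpr (inter_subset_left : A ∩ B ⊆ A))]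
  linear_combination (-∏ T ∈ A.powerset.erase (A ∩ B), (∑ i ∈ T, α i - β)) * hM A B

end ClearedMatrix

section Nonvanishing

theorem eq_zero_of_sum_powerset_eq_zero {ι M : Type*} [AddCommMonoid M] {v : Finset ι → M}
    (h : ∀ A : Finset ι, ∑ B ∈ A.powerset, v B = 0) : v = 0 := by
  funext A
  induction A using Finset.strongInduction with
  | H A ih =>
    have hsingle : ∑ B ∈ A.powerset, v B = v A :=
      sum_eq_single_of_mem A (mem_powerset_self A) fun B hB hBA =>
        ih B ((mem_powerset.mp hB).ssubset_of_ne hBA)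
    exact hsingle.symm.trans (h A)

theorem sum_X_ne_zero {ι R : Type*} [CommSemiring R] [Nontrivial R] {A : Finset ι}
    (hA : A.Nonempty) : ∑ i ∈ A, (MvPolynomial.X i : MvPolynomial ι R) ≠ 0 := by
  classical
  obtain ⟨j, hj⟩ := hA
  intro hsum
  have heval := congrArg (MvPolynomial.eval (Pi.single j 1)) hsum
  simp [Pi.single_apply, hj] at heval

variable {ι R : Type*} [Fintype ι] [DecidableEq ι] [CommRing R] [IsDomain R]

theorem det_clearedMatrix_zero_ne_zero {α : ι → R}
    (hα : ∀ T : Finset ι, T.Nonempty → ∑ i ∈ T, α i ≠ 0) : (clearedMatrix α 0).det ≠ 0 := by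
  intro hdet
  obtain ⟨v, hv, hker⟩ := Matrix.exists_mulVec_eq_zero_iff.mpr hdet
  refine hv (eq_zero_of_sum_powerset_eq_zero fun A => ?_)
  have hpowerset : A.powerset = univ.filter (Disjoint Aᶜ) := by
    ext B
    simp only [mem_powerset, mem_filter_univ, disjoint_compl_left_iff]
  have hrow : (∏ T ∈ Aᶜ.powerset.erase ∅, ∑ i ∈ T, α i) * ∑ B ∈ A.powerset, v B = 0 := by
    refine Eq.trans ?_ (congrFun hker Aᶜ)
    simp only [hpowerset, sum_filter, mul_sum, mul_ite, mul_zero, Matrix.mulVec, dotProduct,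
      clearedMatrix_zero_apply, ite_mul, zero_mul]
  refine (mul_eq_zero.mp hrow).resolve_left (prod_ne_zero_iff.mpr fun T hT => ?_)
  exact hα T (nonempty_iff_ne_empty.mpr (ne_of_mem_erase hT))

open LaurentPolynomial in
theorem det_clearedMatrix_X_ne_zero (β : R) :
    (clearedMatrix (MvPolynomial.X : ι → MvPolynomial ι R) (MvPolynomial.C β)).det ≠ 0 := by
  intro hdet
  let scale : MvPolynomial ι R →+* (MvPolynomial ι R)[T;T⁻¹] :=
    MvPolynomial.eval₂Hom (LaurentPolynomial.C.comp MvPolynomial.C)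
      fun i => T (-1) * LaurentPolynomial.C (MvPolynomial.X i)
  let P := (clearedMatrix (fun i : ι => Polynomial.C (MvPolynomial.X i : MvPolynomial ι R))
    (Polynomial.X * Polynomial.C (MvPolynomial.C β))).det
  -- By homogeneity `det (X, t β) = t ^ d * det (t⁻¹ X, β)`; then put `t = 0`.
  have hP : P = 0 := by
    apply Polynomial.toLaurent_injective
    have hscaled := det_clearedMatrix_mul_left (T 1) (fun i => scale (MvPolynomial.X i))
      (scale (MvPolynomial.C β))
    rw [← map_det_clearedMatrix, hdet, map_zero, mul_zero] at hscaled
    rw [map_zero, map_det_clearedMatrix, ← hscaled]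
    simp [scale, ← mul_assoc]
  have hzero := congrArg (Polynomial.evalRingHom 0) hP
  rw [map_det_clearedMatrix] at hzero
  refine det_clearedMatrix_zero_ne_zero (α := (MvPolynomial.X : ι → MvPolynomial ι R))
    (fun _ => sum_X_ne_zero) ?_
  simpa using hzero

end Nonvanishing

section Counting

theorem sum_two_pow_card_sub_one (ι : Type*) [Fintype ι] :
    ∑ A : Finset ι, (2 ^ #A - 1) = 3 ^ Fintype.card ι - 2 ^ Fintype.card ι := by
  have hthree : ∑ A : Finset ι, 2 ^ #A = 3 ^ Fintype.card ι := by
    simpa only [one_pow, mul_one] using Fintype.sum_pow_mul_eq_add_pow ι (2 : ℕ) 1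
  rw [sum_tsub_distrib _ fun A _ => Nat.one_le_two_pow, hthree]
  simp only [sum_const, card_univ, Fintype.card_finset, smul_eq_mul, mul_one]

theorem totalDegree_det_le {m σ R : Type*} [Fintype m] [DecidableEq m] [CommRing R]
    {M : Matrix m m (MvPolynomial σ R)} {d : m → ℕ} (h : ∀ i j, (M i j).totalDegree ≤ d i) :
    M.det.totalDegree ≤ ∑ i, d i := by
  rw [Matrix.det_apply]
  refine MvPolynomial.totalDegree_finsetSum_le fun τ _ => ?_
  refine (MvPolynomial.totalDegree_smul_le _ _).trans ?_
  refine (MvPolynomial.totalDegree_finsetProd _ _).trans ?_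
  rw [← Equiv.sum_comp τ d]
  exact sum_le_sum fun i _ => h (τ i) i

theorem totalDegree_det_clearedMatrix_X_le {ι R : Type*} [Fintype ι] [DecidableEq ι] [CommRing R]
    [Nontrivial R] (β : R) :
    (clearedMatrix (MvPolynomial.X : ι → MvPolynomial ι R) (MvPolynomial.C β)).det.totalDegree ≤
      3 ^ Fintype.card ι - 2 ^ Fintype.card ι := by
  rw [← sum_two_pow_card_sub_one]
  refine totalDegree_det_le fun A B => ?_
  have hfactor (T : Finset ι) :
      (∑ i ∈ T, MvPolynomial.X i - MvPolynomial.C β : MvPolynomial ι R).totalDegree ≤ 1 :=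
    (MvPolynomial.totalDegree_sub_C_le _ _).trans <|
      MvPolynomial.totalDegree_finsetSum_le fun i _ => (MvPolynomial.totalDegree_X i).le
  rw [clearedMatrix_apply, ← card_powerset_erase_inter A B, card_eq_sum_ones]
  exact (MvPolynomial.totalDegree_finsetProd _ _).trans (sum_le_sum fun T _ => hfactor T)

variable {R : Type*} [CommRing R] [IsDomain R] [DecidableEq R] {n : ℕ}

theorem card_filter_eval_eq_zero_le {p : MvPolynomial (Fin n) R} (hp : p ≠ 0) (S : Finset R) :
    #{x ∈ Fintype.piFinset fun _ => S | MvPolynomial.eval x p = 0} ≤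
      p.totalDegree * #S ^ (n - 1) := by
  cases n with
  | zero =>
    rw [p.eq_C_of_isEmpty] at hp ⊢
    simp [MvPolynomial.C_ne_zero.mp hp]
  | succ n =>
    obtain rfl | hS := S.eq_empty_or_nonempty
    · simp
    have hpos : (0 : ℚ≥0) < #S := by exact_mod_cast hS.card_pos
    have hSZ := MvPolynomial.schwartz_zippel_totalDegree hp S
    rw [div_le_div_iff₀ (pow_pos hpos _) hpos, pow_succ, ← mul_assoc] at hSZ
    exact_mod_cast le_of_mul_le_mul_right hSZ hpos

theorem card_filter_det_clearedMatrix_eq_zero_le (β : R) (S : Finset R) :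
    #{α ∈ Fintype.piFinset fun _ : Fin n => S | (clearedMatrix α β).det = 0} ≤
      (3 ^ n - 2 ^ n) * #S ^ (n - 1) := by
  have hzeros := card_filter_eval_eq_zero_le (det_clearedMatrix_X_ne_zero (ι := Fin n) β) S
  simp only [map_det_clearedMatrix, MvPolynomial.eval_X, MvPolynomial.eval_C] at hzeros
  refine hzeros.trans (Nat.mul_le_mul_right _ ?_)
  simpa only [Fintype.card_fin] using totalDegree_det_clearedMatrix_X_le (ι := Fin n) β

end Counting

section LinearIndependence

theorem linearIndependent_of_det_apply_ne_zero {m R V : Type*} [Fintype m] [DecidableEq m]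
    [CommRing R] [IsDomain R] [AddCommGroup V] [Module R V] (φ : m → V →ₗ[R] R) (p : m → V)
    (h : (Matrix.of fun i j => φ i (p j)).det ≠ 0) : LinearIndependent R p :=
  LinearIndependent.of_comp (LinearMap.pi φ) (Matrix.linearIndependent_cols_of_det_ne_zero h)

theorem aeval_aeval_sumElim_X_C {σ τ R : Type*} [CommSemiring R] (a : σ → R) (b : τ → R)
    (p : MvPolynomial (σ ⊕ τ) R) :
    MvPolynomial.aeval a
        (MvPolynomial.aeval (Sum.elim MvPolynomial.X fun i => MvPolynomial.C (b i)) p) =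
      MvPolynomial.eval (Sum.elim a b) p := by
  rw [← AlgHom.comp_apply, MvPolynomial.comp_aeval, ← MvPolynomial.aeval_eq_eval]
  congr 2
  ext (i | i) <;> simp

theorem linearIndependent_aeval_of_det_clearedMatrix_ne_zero {ι R : Type*} [Fintype ι]
    [DecidableEq ι] [CommRing R] [IsDomain R] {α : ι → R} {β : R} {p : MvPolynomial (ι ⊕ ι) R}
    (hp : ∀ a b : ι → R, (∀ i, a i = 0 ∨ a i = 1) → (∀ i, b i = 0 ∨ b i = 1) →
      MvPolynomial.eval (Sum.elim a b) p * ((∑ i, α i * a i * b i) - β) = 1)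
    (hdet : (clearedMatrix α β).det ≠ 0) :
    LinearIndependent R fun b : ι → Bool =>
      MvPolynomial.aeval (Sum.elim (MvPolynomial.X : ι → MvPolynomial ι R)
        fun i => MvPolynomial.C (if b i then (1 : R) else 0)) p := by
  let indicator (A : Finset ι) (i : ι) : R := if i ∈ A then 1 else 0
  have hindicator (A : Finset ι) (i : ι) : indicator A i = 0 ∨ indicator A i = 1 :=
    (ite_eq_or_eq _ _ _).symm
  have hvalue (A B : Finset ι) : MvPolynomial.eval (Sum.elim (indicator A) (indicator B)) p *
      (∑ i ∈ A ∩ B, α i - β) = 1 := by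
    rw [← hp _ _ (hindicator A) (hindicator B)]
    simp [indicator, ← ite_and, ← mem_inter, inter_comm]
  rw [det_clearedMatrix_eq_prod_mul_det (M := Matrix.of fun A B =>
    MvPolynomial.eval (Sum.elim (indicator A) (indicator B)) p) hvalue] at hdet
  have hindep := linearIndependent_of_det_apply_ne_zero
    (fun A : Finset ι => (MvPolynomial.aeval (R := R) (indicator A)).toLinearMap)
    (fun B => MvPolynomial.aeval
      (Sum.elim MvPolynomial.X fun i => MvPolynomial.C (indicator B i)) p)
    (by simpa only [AlgHom.toLinearMap_apply, aeval_aeval_sumElim_X_C]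
      using right_ne_zero_of_mul hdet)
  have hinj : Function.Injective fun b : ι → Bool => univ.filter fun i => b i := fun b b' h =>
    funext fun i => Bool.eq_iff_iff.mpr (by simpa using Finset.ext_iff.mp h i)
  simpa [Function.comp_def, indicator] using hindep.comp _ hinj

end LinearIndependence

open scoped Classical in
theorem evaluation_dimension_lower_bound_fixed_order_general
    {R : Type*} [CommRing R] [IsDomain R] (n : ℕ) (β : R) (S : Finset R)
    (f : (Fin n → R) → MvPolynomial (Fin n ⊕ Fin n) R)
    (hagree : ∀ α, (∀ i, α i ∈ S) → ∀ a b : Fin n → R,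
      (∀ i, a i = 0 ∨ a i = 1) → (∀ i, b i = 0 ∨ b i = 1) →
      MvPolynomial.eval (Sum.elim a b) (f α) * ((∑ i, α i * a i * b i) - β) = 1) :
    ((Fintype.piFinset fun _ : Fin n => S).filter fun α =>
        Module.finrank R ↥(Submodule.span R
          (Set.range fun b : Fin n → Bool =>
            MvPolynomial.aeval
              (Sum.elim (MvPolynomial.X : Fin n → MvPolynomial (Fin n) R)
                (fun i => MvPolynomial.C (if b i then (1 : R) else 0)))
              (f α))) < 2 ^ n).card
      ≤ (3 ^ n - 2 ^ n) * S.card ^ (n - 1) := by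
  refine (card_le_card fun α hα => ?_).trans (card_filter_det_clearedMatrix_eq_zero_le β S)
  obtain ⟨hαS, hdim⟩ := mem_filter.mp hα
  refine mem_filter.mpr ⟨hαS, ?_⟩
  contrapose! hdim with hdet
  rw [finrank_span_eq_card (linearIndependent_aeval_of_det_clearedMatrix_ne_zero
    (hagree α (Fintype.mem_piFinset.mp hαS)) hdet)]
  simp

open scoped Classical in
/-- Let `F` be a strict subfield of `F'`, `β ∈ F' \ F`, `S ⊆ F` finite
nonempty.  For `α ∈ S^n`, let `f α` be the multilinear polynomial in variables
`x_1,…,x_n,y_1,…,y_n` agreeing with `1/(∑ i, α i * x i * y i - β)` on the Boolean cube.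
The number of `α ∈ S^n` for which the span of the evaluations
`{ f α (x, b) : b ∈ {0,1}^n }` has dimension `< 2^n` is at most `2^{2n} * |S|^{n-1}`. -/
theorem evaluation_dimension_lower_bound_fixed_order
    (F' : Type*) [Field F'] (F : Subfield F') (hF : F ≠ ⊤)
    (n : ℕ) (β : F') (hβ : β ∉ F)
    (S : Finset F') (hSF : ∀ s ∈ S, s ∈ F) (hSne : S.Nonempty)
    (f : (Fin n → F') → MvPolynomial (Fin n ⊕ Fin n) F')
    (hml : ∀ α, (∀ i, α i ∈ S) → ∀ v, (f α).degreeOf v ≤ 1)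
    (hagree : ∀ α, (∀ i, α i ∈ S) → ∀ a b : Fin n → F',
      (∀ i, a i = 0 ∨ a i = 1) → (∀ i, b i = 0 ∨ b i = 1) →
      MvPolynomial.eval (Sum.elim a b) (f α) * ((∑ i, α i * a i * b i) - β) = 1) :
    ((Fintype.piFinset fun _ : Fin n => S).filter fun α =>
        Module.finrank F' ↥(Submodule.span F'
          (Set.range fun b : Fin n → Bool =>
            MvPolynomial.aeval
              (Sum.elim (MvPolynomial.X : Fin n → MvPolynomial (Fin n) F')
                (fun i => MvPolynomial.C (if b i then (1 : F') else 0)))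
              (f α))) < 2 ^ n).card
      ≤ 2 ^ (2 * n) * S.card ^ (n - 1) := by
  have hbound : 3 ^ n - 2 ^ n ≤ 2 ^ (2 * n) := by
    rw [pow_mul]
    exact (Nat.sub_le _ _).trans (Nat.pow_le_pow_left (by norm_num) n)
  exact (evaluation_dimension_lower_bound_fixed_order_general n β S f hagree).trans
    (Nat.mul_le_mul_right _ hbound)
end

section
/- Let p be a prime, k ≥ 1, and n ∈ ℕ. Let F be a field of characteristic p containing a subfield F₀ with exactly p^k elements. Let f ∈ F[x_1,…,x_n] be a polynomial of total degree at most D all of whose coefficients lie in F₀, and let β ∈ F \ F₀. Then f − β has no zero in {0,1}^n, and there exist polynomials A, B_1,…,B_n ∈ F[x_1,…,x_n] such that A·(f − β) + Σ_{j=1}^n B_j·(x_j² − x_j) = 1, with deg A ≤ k(p−1)·D and deg B_j ≤ k(p−1)·D + 2D for every j. -/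
/-!
Let `q = p ^ k` and `g = f - β`. At a Boolean point `a` the value `c = f(a)` lies in `F₀`, so
`c ^ q = c` and `g(a) ^ q - g(a) = β - β ^ q` is a nonzero constant. Hence `g(a) ^ (q - 1) - 1`
is a constant multiple of an inverse of `g(a)`. The polynomial `g ^ (q - 1)` has too large a degree,
but `q - 1 = ∑ i < k, (p - 1) p ^ i`, and at a Boolean point `g(a) ^ p ^ i` is also the value of
the polynomial obtained from `g` by raising only its coefficients to the power `p ^ i`, which does
not increase the degree. The resulting `A` satisfies `A * g = 1` on the Boolean cube, and the
Combinatorial Nullstellensatz writes `1 - A * g` in terms of the `X j ^ 2 - X j`.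
-/

open MvPolynomial

lemma mem_subfield_iff_pow_card_eq_self {F : Type*} [Field F] (K : Subfield F) [Finite K] {x : F} :
    x ∈ K ↔ x ^ Nat.card K = x := by
  have := Fintype.ofFinite K
  rw [Nat.card_eq_fintype_card]
  set P : Polynomial K := Polynomial.X ^ Fintype.card K - Polynomial.X
  have roots_eq : P.roots = Finset.univ.val := FiniteField.roots_X_pow_card_sub_X K
  have splits : P.Splits := by
    rw [Polynomial.splits_iff_card_roots, roots_eq, ← Finset.card_def, Finset.card_univ,
      FiniteField.X_pow_card_sub_X_natDegree_eq K Fintype.one_lt_card]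
  have mem_roots_map_iff := roots_eq ▸ splits.roots_map K.subtype ▸ Multiset.mem_map (b := x)
  simpa [P, sub_eq_zero, FiniteField.X_pow_card_sub_X_ne_zero F Fintype.one_lt_card, iff_comm]
    using mem_roots_map_iff

lemma totalDegree_map_le {σ R S : Type*} [CommSemiring R] [CommSemiring S] (φ : R →+* S)
    (g : MvPolynomial σ R) : (map φ g).totalDegree ≤ g.totalDegree :=
  Finset.sup_mono (support_map_subset φ g)

lemma eval_map_of_isFixedPt {σ R : Type*} [CommSemiring R] (φ : R →+* R) (g : MvPolynomial σ R)
    {a : σ → R} (ha : ∀ j, Function.IsFixedPt φ (a j)) : eval a (map φ g) = φ (eval a g) := by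
  rw [eval_map, eval₂_comp, show φ ∘ a = a from funext ha]

lemma prod_pow_pow_pred_mul_self {M : Type*} [CommMonoid M] {p : ℕ} (hp : 1 ≤ p) (k : ℕ) (y : M) :
    (∏ i ∈ Finset.range k, (y ^ p ^ i) ^ (p - 1)) * y = y ^ p ^ k := by
  simp_rw [← pow_mul]
  rw [Finset.prod_pow_eq_pow_sum, ← Finset.sum_mul, ← pow_succ, geom_sum_mul_of_one_le hp,
    Nat.sub_add_cancel (Nat.one_le_pow _ _ hp)]

section FrobeniusCofactor

variable {σ R : Type*} [CommSemiring R] (p : ℕ) [ExpChar R p]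

/-- A low-degree substitute for `g ^ (p ^ k - 1)`: the two agree at the points with coordinates
fixed by Frobenius. It replaces each factor `g ^ p ^ i` by the polynomial obtained from `g` by
applying the `i`-th iterate of Frobenius to the coefficients only. -/
noncomputable def frobeniusCofactor (k : ℕ) (g : MvPolynomial σ R) : MvPolynomial σ R :=
  ∏ i ∈ Finset.range k, map (iterateFrobenius R p i) g ^ (p - 1)

lemma totalDegree_frobeniusCofactor_le (k : ℕ) (g : MvPolynomial σ R) :
    (frobeniusCofactor p k g).totalDegree ≤ k * (p - 1) * g.totalDegree :=
  calc (frobeniusCofactor p k g).totalDegree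
    _ ≤ ∑ i ∈ Finset.range k, (map (iterateFrobenius R p i) g ^ (p - 1)).totalDegree :=
      totalDegree_finsetProd _ _
    _ ≤ ∑ _i ∈ Finset.range k, (p - 1) * g.totalDegree := by
      gcongr with i
      exact (totalDegree_pow _ _).trans (Nat.mul_le_mul_left _ (totalDegree_map_le _ g))
    _ = k * (p - 1) * g.totalDegree := by simp [mul_assoc]

lemma eval_frobeniusCofactor_mul_eval (k : ℕ) (g : MvPolynomial σ R) {a : σ → R}
    (ha : ∀ j, Function.IsFixedPt (frobenius R p) (a j)) :
    eval a (frobeniusCofactor p k g) * eval a g = eval a g ^ p ^ k := by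
  have eval_map_iterate (i : ℕ) : eval a (map (iterateFrobenius R p i) g) = eval a g ^ p ^ i := by
    refine eval_map_of_isFixedPt _ g fun j => ?_
    rw [coe_iterateFrobenius]
    exact (ha j).iterate i
  simp only [frobeniusCofactor, map_prod, map_pow, eval_map_iterate]
  exact prod_pow_pow_pred_mul_self (expChar_pos R p) k _

end FrobeniusCofactor

lemma exists_eval_mul_sub_C_eq_one {σ F : Type*} [Field F] (p : ℕ) [ExpChar F p] (k : ℕ)
    (f : MvPolynomial σ F) {β : F} (hβ : β ^ p ^ k ≠ β) :
    ∃ A : MvPolynomial σ F, A.totalDegree ≤ k * (p - 1) * f.totalDegree ∧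
      ∀ a : σ → F, (∀ j, Function.IsFixedPt (frobenius F p) (a j)) →
        eval a f ^ p ^ k = eval a f → eval a (A * (f - C β)) = 1 := by
  refine ⟨C (β - β ^ p ^ k)⁻¹ * (frobeniusCofactor p k (f - C β) - C 1), ?_, fun a ha hfa => ?_⟩
  · calc _ ≤ (frobeniusCofactor p k (f - C β) - C 1).totalDegree := by
          simpa only [totalDegree_C, zero_add] using totalDegree_mul (C (β - β ^ p ^ k)⁻¹) _
      _ ≤ (frobeniusCofactor p k (f - C β)).totalDegree := totalDegree_sub_C_le _ _
      _ ≤ k * (p - 1) * (f - C β).totalDegree := totalDegree_frobeniusCofactor_le p k _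
      _ ≤ k * (p - 1) * f.totalDegree := Nat.mul_le_mul_left _ (totalDegree_sub_C_le f β)
  · have pow_sub_self : (eval a f - β) ^ p ^ k - (eval a f - β) = β - β ^ p ^ k := by
      rw [sub_pow_expChar_pow, hfa]
      ring
    have cofactor_mul := eval_frobeniusCofactor_mul_eval p k (f - C β) ha
    simp only [map_sub, eval_C] at cofactor_mul
    simp only [map_mul, map_sub, eval_C]
    rw [mul_assoc, sub_mul, cofactor_mul, one_mul, pow_sub_self,
      inv_mul_cancel₀ (sub_ne_zero.2 hβ.symm)]

lemma exists_sum_mul_sq_sub_self_eq {σ R : Type*} [Fintype σ] [CommRing R] [IsDomain R]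
    {g : MvPolynomial σ R} (hg : ∀ a : σ → R, (∀ j, a j = 0 ∨ a j = 1) → eval a g = 0) :
    ∃ B : σ → MvPolynomial σ R, ∑ j, B j * (X j ^ 2 - X j) = g ∧
      ∀ j, (B j).totalDegree ≤ g.totalDegree := by
  classical
  have prod_eq (j : σ) :
      ∏ s ∈ ({0, 1} : Finset R), (X j - C s : MvPolynomial σ R) = X j ^ 2 - X j := by
    rw [Finset.prod_pair zero_ne_one, C_0, C_1]
    ring
  obtain ⟨B, totalDegree_le, g_eq⟩ := combinatorial_nullstellensatz_exists_linearCombination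
    (fun _ : σ => ({0, 1} : Finset R)) (fun _ => Finset.insert_nonempty _ _) g
    fun a ha => hg a (by simpa using ha)
  simp only [prod_eq] at totalDegree_le g_eq
  refine ⟨B, ?_, fun j => ?_⟩
  · rw [g_eq, Finsupp.linearCombination_apply, Finsupp.sum_fintype _ _ (by simp)]
    simp only [smul_eq_mul]
  · by_cases hBj : B j = 0
    · simp [hBj]
    have sq_sub_ne_zero : (X j ^ 2 - X j : MvPolynomial σ R) ≠ 0 :=
      sub_ne_zero.2 fun sq_eq => by simpa using congrArg totalDegree sq_eq
    exact (totalDegree_le_of_dvd_of_isDomain (dvd_mul_left _ _)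
      (mul_ne_zero sq_sub_ne_zero hBj)).trans (totalDegree_le j)

theorem nullstellensatz_certificate_sparse_positive_char_general
    {σ F : Type*} [Fintype σ] [Field F] (p : ℕ) [ExpChar F p] (k : ℕ)
    (F₀ : Subfield F) (hF₀ : Nat.card F₀ = p ^ k)
    (f : MvPolynomial σ F) (hf : ∀ m, f.coeff m ∈ F₀) (β : F) (hβ : β ∉ F₀) :
    (∀ a : σ → F, (∀ j, a j ∈ F₀) → eval a (f - C β) ≠ 0) ∧
    ∃ (A : MvPolynomial σ F) (B : σ → MvPolynomial σ F),
      A * (f - C β) + ∑ j, B j * (X j ^ 2 - X j) = 1 ∧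
      A.totalDegree ≤ k * (p - 1) * f.totalDegree ∧
      ∀ j, (B j).totalDegree ≤ k * (p - 1) * f.totalDegree + f.totalDegree := by
  have eval_mem_of_mem (a : σ → F) (ha : ∀ j, a j ∈ F₀) : eval a f ∈ F₀ :=
    eval_mem (fun m _ => hf m) ha
  have : Finite F₀ :=
    Nat.finite_of_card_ne_zero (hF₀ ▸ (Nat.pow_pos (expChar_pos F p)).ne')
  have mem_iff {x : F} : x ∈ F₀ ↔ x ^ p ^ k = x := hF₀ ▸ mem_subfield_iff_pow_card_eq_self F₀
  have eval_ne_zero (a : σ → F) (ha : ∀ j, a j ∈ F₀) : eval a (f - C β) ≠ 0 := by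
    rw [map_sub, eval_C, sub_ne_zero]
    exact fun eval_eq => hβ (eval_eq ▸ eval_mem_of_mem a ha)
  obtain ⟨A, hA, A_mul_eq_one⟩ := exists_eval_mul_sub_C_eq_one p k f (mt mem_iff.2 hβ)
  have vanishes (a : σ → F) (ha : ∀ j, a j = 0 ∨ a j = 1) :
      eval a (1 - A * (f - C β)) = 0 := by
    rw [map_sub, map_one, A_mul_eq_one a, sub_self]
    · exact fun j => (ha j).elim (· ▸ map_zero _) (· ▸ map_one _)
    · exact mem_iff.1 <| eval_mem_of_mem a fun j =>
        (ha j).elim (· ▸ zero_mem F₀) (· ▸ one_mem F₀)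
  obtain ⟨B, B_sum, hB⟩ := exists_sum_mul_sq_sub_self_eq vanishes
  refine ⟨eval_ne_zero, A, B, by rw [B_sum, add_sub_cancel], hA, fun j => (hB j).trans ?_⟩
  calc (1 - A * (f - C β)).totalDegree
    _ ≤ (A * (f - C β)).totalDegree := by
      simpa using totalDegree_sub (1 : MvPolynomial σ F) (A * (f - C β))
    _ ≤ A.totalDegree + (f - C β).totalDegree := totalDegree_mul _ _
    _ ≤ _ := add_le_add hA (totalDegree_sub_C_le f β)

/-- Low-degree Nullstellensatz refutation for an unsatisfiable sparse
instance over positive characteristic: if `F` has characteristic `p` and contains a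
subfield `F₀` of size `p^k`, `f` has total degree `≤ D` and all coefficients in `F₀`,
and `β ∉ F₀`, then `f - β` has no Boolean zero and there is a certificate
`A·(f - β) + ∑ j, B j·(x j² - x j) = 1` with `deg A ≤ k(p-1)D` and
`deg (B j) ≤ k(p-1)D + 2D`. -/
theorem nullstellensatz_certificate_sparse_positive_char
    (p : ℕ) (hp : p.Prime) (k : ℕ) (hk : 1 ≤ k) (n : ℕ)
    (F : Type*) [Field F] [CharP F p]
    (F₀ : Subfield F) (hF₀ : Nat.card F₀ = p ^ k)
    (D : ℕ) (f : MvPolynomial (Fin n) F)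
    (hdeg : f.totalDegree ≤ D) (hcoeff : ∀ m, f.coeff m ∈ F₀)
    (β : F) (hβ : β ∉ F₀) :
    (∀ a : Fin n → F, (∀ i, a i = 0 ∨ a i = 1) →
      MvPolynomial.eval a (f - MvPolynomial.C β) ≠ 0) ∧
    ∃ (A : MvPolynomial (Fin n) F) (B : Fin n → MvPolynomial (Fin n) F),
      A * (f - MvPolynomial.C β) +
          ∑ j, B j * (MvPolynomial.X j ^ 2 - MvPolynomial.X j) = 1 ∧
      A.totalDegree ≤ k * (p - 1) * D ∧
      ∀ j, (B j).totalDegree ≤ k * (p - 1) * D + 2 * D := by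
  have : ExpChar F p := .prime hp
  obtain ⟨ne_zero, A, B, sum_eq, hA, hB⟩ :=
    nullstellensatz_certificate_sparse_positive_char_general p k F₀ hF₀ f hcoeff β hβ
  have hAD : k * (p - 1) * f.totalDegree ≤ k * (p - 1) * D := Nat.mul_le_mul_left _ hdeg
  exact ⟨fun a ha => ne_zero a fun i => (ha i).elim (· ▸ zero_mem F₀) (· ▸ one_mem F₀),
    A, B, sum_eq, hA.trans hAD, fun j => (hB j).trans (by lia)⟩
end
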